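/- arXiv:0905.1205 — 5 statements merged into one kernel-verified Lean document; each statement's English description precedes it below -/
import Mathlib

section
/- Let G be a finite group and let H be a maximal proper subgroup of G which is cyclic. Then for every x ∈ G with x ∉ H, the intersection H ∩ x⁻¹Hx is a normal subgroup of G. (Step in the proof of Theorem 5.11.) -/
/-- Two elements of a cyclic subgroup commute. -/
theorem Subgroup.mul_comm_of_mem_of_isCyclic {G : Type*} [Group G] {H : Subgroup G}
    (hcyc : IsCyclic H) {a b : G} (ha : a ∈ H) (hb : b ∈ H) : a * b = b * a :=
  congrArg Subtype.val (IsCyclic.isMulCommutative.is_comm.comm (⟨a, ha⟩ : H) ⟨b, hb⟩)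

/-- Let `G` be a finite group and `H` a maximal proper subgroup of `G` which is cyclic.
Then for every `x ∈ G` with `x ∉ H`, the intersection `H ⊓ x⁻¹Hx` is a normal subgroup
of `G`. -/
theorem frobenius_step_normal {G : Type*} [Group G] [Finite G] (H : Subgroup G)
    (hmax : IsCoatom H) (hcyc : IsCyclic H) (x : G) (hx : x ∉ H) :
    (H ⊓ Subgroup.map ((MulAut.conj x⁻¹).toMonoidHom) H).Normal := by
  set K := Subgroup.map (MulAut.conj x⁻¹).toMonoidHom H
  by_cases hKH : K ≤ H
  · have hcard : Nat.card K = Nat.card H :=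
      Subgroup.card_map_of_injective (MulAut.conj x⁻¹).injective
    have hKH_eq : K = H := Subgroup.eq_of_le_of_card_ge hKH hcard.ge
    have hx_norm : x⁻¹ ∈ Subgroup.normalizer (H : Set G) := by
      rw [Subgroup.mem_normalizer_iff]
      intro h
      conv_rhs => rw [← hKH_eq]
      exact (Subgroup.mem_map_iff_mem (f := (MulAut.conj x⁻¹).toMonoidHom)
        (MulAut.conj x⁻¹).injective).symm
    have hlt : H < Subgroup.normalizer (H : Set G) :=
      SetLike.lt_iff_le_and_exists.mpr ⟨Subgroup.le_normalizer, x, inv_mem_iff.mp hx_norm, hx⟩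
    rw [hKH_eq, inf_idem]
    exact Subgroup.normalizer_eq_top_iff.mp (hmax.2 _ hlt)
  · have hKcyc : IsCyclic K :=
      isCyclic_of_surjective _ (MonoidHom.subgroupMap_surjective (MulAut.conj x⁻¹).toMonoidHom H)
    have hH_le : H ≤ Subgroup.centralizer ((H ⊓ K : Subgroup G) : Set G) := fun _ ha _ hb =>
      Subgroup.mul_comm_of_mem_of_isCyclic hcyc hb.1 ha
    have hK_le : K ≤ Subgroup.centralizer ((H ⊓ K : Subgroup G) : Set G) := fun _ ha _ hb =>
      Subgroup.mul_comm_of_mem_of_isCyclic hKcyc hb.2 ha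
    have htop : Subgroup.centralizer ((H ⊓ K : Subgroup G) : Set G) = ⊤ :=
      hmax.2 _ (lt_of_le_of_ne hH_le fun h => hKH (hK_le.trans h.ge))
    refine ⟨fun n hn g => ?_⟩
    have hg : g ∈ Subgroup.centralizer ((H ⊓ K : Subgroup G) : Set G) := htop ▸ Subgroup.mem_top g
    rwa [← Subgroup.mem_centralizer_iff.mp hg n hn, mul_inv_cancel_right]
end

section
/- Let G be a finite simple group and let H be a maximal proper subgroup of G which is cyclic. Then for every x ∈ G with x ∉ H, the intersection H ∩ x⁻¹Hx is the trivial subgroup; that is, H is malnormal in G. (Step in the proof of Theorem 5.11 showing G is a Frobenius group with respect to H.) -/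
/-- In a simple group, two abelian subgroups that together generate the group
intersect trivially if the first is proper. -/
theorem Subgroup.inf_eq_bot_of_sup_eq_top {G : Type*} [Group G] [IsSimpleGroup G]
    {A B : Subgroup G} [IsMulCommutative A] [IsMulCommutative B]
    (hA : A ≠ ⊤) (h : A ⊔ B = ⊤) : A ⊓ B = ⊥ := by
  have hcent : Subgroup.centralizer ((A ⊓ B : Subgroup G) : Set G) = ⊤ :=
    top_le_iff.mp <| h ▸ sup_le
      (A.le_centralizer.trans (Subgroup.centralizer_le fun _ hg => hg.1))
      (B.le_centralizer.trans (Subgroup.centralizer_le fun _ hg => hg.2))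
  have hnormal : (A ⊓ B).Normal := by
    rw [← Subgroup.normalizer_eq_top_iff, ← top_le_iff, ← hcent]
    exact Subgroup.centralizer_le_normalizer _
  exact hnormal.eq_bot_or_eq_top.resolve_right fun htop => hA (top_le_iff.mp (htop ▸ inf_le_left))

/-- Let `G` be a finite simple group and `H` a maximal proper subgroup of `G` which is
cyclic. Then for every `x ∈ G` with `x ∉ H`, the intersection `H ⊓ x⁻¹Hx` is trivial,
i.e. `H` is malnormal in `G`. -/
theorem frobenius_step_malnormal {G : Type*} [Group G] [Finite G] [IsSimpleGroup G]
    (H : Subgroup G) (hmax : IsCoatom H) (hcyc : IsCyclic H) (x : G) (hx : x ∉ H) :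
    H ⊓ Subgroup.map ((MulAut.conj x⁻¹).toMonoidHom) H = ⊥ := by
  by_cases hle : Subgroup.map ((MulAut.conj x⁻¹).toMonoidHom) H ≤ H
  · have heq : Subgroup.map ((MulAut.conj x⁻¹).toMonoidHom) H = H :=
      Subgroup.eq_of_le_of_card_ge hle
        (Subgroup.card_map_of_injective (MulAut.conj x⁻¹).injective).ge
    have hmem : x ∈ Subgroup.normalizer (H : Set G) := by
      rw [← inv_mem_iff]
      exact Subgroup.mem_normalizer_iff_map_conj_eq.mpr heq
    have hnormal : H.Normal := Subgroup.normalizer_eq_top_iff.mp <|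
      hmax.2 _ (lt_of_le_of_ne Subgroup.le_normalizer fun he => hx (by rw [he]; exact hmem))
    rw [hnormal.eq_bot_or_eq_top.resolve_right hmax.1, bot_inf_eq]
  · exact Subgroup.inf_eq_bot_of_sup_eq_top hmax.1 (hmax.2 _ (left_lt_sup.mpr hle))
end

section
/- Let G be a finite simple group such that every proper subgroup of G is cyclic. Then G is commutative; equivalently, G is cyclic of prime order, i.e. there is a prime number p with |G| = p. (Group-theoretic conclusion of the proof of Theorem 5.11: there is no non-commutative finite simple group all of whose proper subgroups are cyclic.) -/
/-- A finite group all of whose proper subgroups are cyclic is solvable: either it is a `p`-group,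
or all its Sylow subgroups are cyclic. -/
theorem isSolvable_of_proper_subgroups_cyclic {G : Type*} [Group G] [Finite G]
    (hcyc : ∀ H : Subgroup G, H ≠ ⊤ → IsCyclic H) : Group.IsSolvable G := by
  by_cases h : ∃ p : ℕ, p.Prime ∧ IsPGroup p G
  · obtain ⟨p, hp, hG⟩ := h
    have : Fact p.Prime := ⟨hp⟩
    have := hG.isNilpotent
    infer_instance
  · have : IsZGroup G := ⟨fun p hp P => hcyc P fun hP => h
      ⟨p, hp, (hP ▸ P.isPGroup' : IsPGroup p (⊤ : Subgroup G)).of_equiv Subgroup.topEquiv⟩⟩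
    infer_instance

/-- A finite simple group all of whose proper subgroups are cyclic is commutative,
and hence cyclic of prime order. -/
theorem finite_simple_group_of_proper_subgroups_cyclic {G : Type*} [Group G] [Finite G]
    [IsSimpleGroup G] (hcyc : ∀ H : Subgroup G, H ≠ ⊤ → IsCyclic H) :
    (∀ a b : G, a * b = b * a) ∧ ∃ p : ℕ, p.Prime ∧ Nat.card G = p := by
  have hcomm : ∀ a b : G, a * b = b * a :=
    IsSimpleGroup.comm_iff_isSolvable.mpr (isSolvable_of_proper_subgroups_cyclic hcyc)
  let _ : CommGroup G := { ‹Group G› with mul_comm := hcomm }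
  exact ⟨hcomm, Nat.card G, IsSimpleGroup.prime_card, rfl⟩
end

section
/- Let G be a finite group and let H be a subgroup of G with H ≠ {1} and H ≠ G such that H ∩ x⁻¹Hx = {1} for every x ∈ G with x ∉ H (that is, G is a Frobenius group with Frobenius complement H). Then G is not a simple group. (Fact invoked in the proof of Theorem 5.11: Frobenius groups are never simple, because of the existence of the Frobenius kernel.) -/
open Module

universe u w

namespace LinearMap

/-- An endomorphism of finite order of a complex vector space is the identity as soon as its
trace equals the dimension. -/
theorem eq_one_of_pow_eq_one_of_trace_eq_finrank {V : Type*} [AddCommGroup V] [Module ℂ V]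
    [FiniteDimensional ℂ V] {f : End ℂ V} {n : ℕ} (hn : n ≠ 0) (hf : f ^ n = 1)
    (htr : trace ℂ V f = finrank ℂ V) : f = 1 := by
  have hsplits : f.charpoly.Splits := IsAlgClosed.splits _
  have hcard : f.charpoly.roots.card = finrank ℂ V := by
    rw [← hsplits.natDegree_eq_card_roots, charpoly_natDegree]
  have hnorm : ∀ z ∈ f.charpoly.roots, ‖z‖ = 1 := by
    intro z hz
    have hz' : f.HasEigenvalue z := by
      rw [End.hasEigenvalue_iff_isRoot_charpoly]
      exact Polynomial.isRoot_of_mem_roots hz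
    obtain ⟨v, hv⟩ := hz'.exists_hasEigenvector
    have h1 : (f ^ n) v = z ^ n • v := hv.pow_apply n
    rw [hf, End.one_apply] at h1
    have h2 : z ^ n = 1 := by
      have : (z ^ n - 1) • v = 0 := by rw [sub_smul, one_smul, ← h1, sub_self]
      exact sub_eq_zero.1 ((smul_eq_zero.1 this).resolve_right hv.2)
    exact Complex.norm_eq_one_of_pow_eq_one h2 hn
  have hsum : (f.charpoly.roots.map fun z ↦ 1 - z.re).sum = 0 := by
    have h := congrArg Complex.re (End.trace_eq_sum_roots_charpoly_of_splits hsplits)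
    rw [htr, ← hcard, Complex.natCast_re] at h
    have hre : f.charpoly.roots.sum.re = (f.charpoly.roots.map Complex.re).sum :=
      map_multiset_sum Complex.reAddGroupHom _
    rw [Multiset.sum_map_sub, ← hre, ← h]
    simp
  have hroots : ∀ z ∈ f.charpoly.roots, z = 1 := by
    intro z hz
    have hnonneg : ∀ x ∈ f.charpoly.roots.map fun z ↦ 1 - z.re, 0 ≤ x := by
      simp only [Multiset.mem_map, forall_exists_index, and_imp]
      rintro x w hw rfl
      have := (Complex.re_le_norm w).trans_eq (hnorm w hw)
      linarith
    have hre : 1 - z.re ≤ 0 :=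
      (Multiset.single_le_sum hnonneg _ (Multiset.mem_map_of_mem _ hz)).trans_eq hsum
    have hle := (Complex.re_le_norm z).trans_eq (hnorm z hz)
    have hsq := Complex.sq_norm z
    rw [hnorm z hz, Complex.normSq_apply] at hsq
    apply Complex.ext
    · simp; linarith
    · have : z.re = 1 := by linarith
      rw [this] at hsq
      simpa using hsq
  have hmin : minpoly ℂ f ∣ (Polynomial.X - Polynomial.C (1 : ℂ)) := by
    have hsq : Squarefree (minpoly ℂ f) := by
      have : (Polynomial.X ^ n - 1 : Polynomial ℂ).Separable :=
        (Polynomial.X_pow_sub_one_separable_iff).2 (by exact_mod_cast hn)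
      refine this.squarefree.squarefree_of_dvd (minpoly.dvd _ _ ?_)
      simp [hf]
    have hpow : minpoly ℂ f ∣ (Polynomial.X - Polynomial.C (1 : ℂ)) ^ finrank ℂ V := by
      have h1 : f.charpoly = (Polynomial.X - Polynomial.C (1 : ℂ)) ^ finrank ℂ V := by
        rw [hsplits.eq_prod_roots_of_monic f.charpoly_monic,
          Multiset.eq_replicate.2 ⟨hcard, hroots⟩, Multiset.map_replicate,
          Multiset.prod_replicate]
      rw [← h1]
      exact minpoly_dvd_charpoly f
    exact hsq.isRadical _ _ hpow
  have := Polynomial.aeval_eq_zero_of_dvd_aeval_eq_zero hmin (minpoly.aeval ℂ f)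
  simpa [sub_eq_zero] using this

/-- The trace of an endomorphism of a power of `V` is the sum of the traces of its diagonal
blocks. -/
theorem trace_pi_eq_sum {k ι V : Type*} [Field k] [Fintype ι] [DecidableEq ι] [AddCommGroup V]
    [Module k V] [FiniteDimensional k V] (T : End k (ι → V)) :
    trace k (ι → V) T = ∑ i, trace k V (proj i ∘ₗ T ∘ₗ single k (fun _ ↦ V) i) := by
  have hT : T = ∑ i, (single k (fun _ ↦ V) i ∘ₗ (proj i ∘ₗ T)) := by
    refine LinearMap.ext fun f ↦ ?_
    simp [LinearMap.sum_apply, Finset.univ_sum_single]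
  conv_lhs => rw [hT, map_sum]
  refine Finset.sum_congr rfl fun i _ ↦ ?_
  rw [trace_comp_comm', comp_assoc]

end LinearMap

namespace Subgroup

/-- A finite group is not the union of the conjugates of a proper subgroup. -/
theorem exists_forall_conj_notMem {G : Type*} [Group G] [Finite G] {H : Subgroup G}
    (hH : H ≠ ⊤) : ∃ g : G, ∀ x : G, x * g * x⁻¹ ∉ H := by
  classical
  have := Fintype.ofFinite G
  by_contra! hcov
  have hburn := MulAction.sum_card_fixedBy_eq_card_orbits_mul_card_group G (G ⧸ H)
  have horb : Fintype.card (MulAction.orbitRel.Quotient G (G ⧸ H)) = 1 := by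
    rw [Fintype.card_eq_one_iff_nonempty_unique]
    have := (MulAction.pretransitive_iff_subsingleton_quotient G (G ⧸ H)).1 inferInstance
    exact ⟨⟨⟨Quotient.mk'' ((1 : G) : G ⧸ H)⟩, fun _ ↦ Subsingleton.elim _ _⟩⟩
  rw [horb, one_mul, ← Finset.card_univ, Finset.card_eq_sum_ones] at hburn
  refine hburn.not_gt (Finset.sum_lt_sum (fun g _ ↦ ?_) ⟨1, Finset.mem_univ _, ?_⟩)
  · obtain ⟨x, hx⟩ := hcov g
    rw [Nat.succ_le_iff, Fintype.card_pos_iff]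
    refine ⟨⟨((x⁻¹ : G) : G ⧸ H), ?_⟩⟩
    rw [MulAction.mem_fixedBy, MulAction.Quotient.smul_coe, eq_comm, QuotientGroup.eq]
    simpa [mul_assoc] using hx
  · obtain ⟨y, hy⟩ : ∃ y, y ∉ H := by
      by_contra! h
      exact hH (eq_top_iff.2 fun y _ ↦ h y)
    rw [Fintype.one_lt_card_iff]
    refine ⟨⟨((1 : G) : G ⧸ H), by simp⟩, ⟨(y : G ⧸ H), by simp⟩, fun h ↦ hy ?_⟩
    simpa [QuotientGroup.eq] using congrArg Subtype.val h

variable {k G : Type*} [Field k] [Group G] {H : Subgroup G}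

theorem extend_coe_of_mem (α : H → k) {g : G} (hg : g ∈ H) :
    Function.extend ((↑) : H → G) α 0 g = α ⟨g, hg⟩ :=
  Subtype.val_injective.extend_apply α 0 ⟨g, hg⟩

theorem extend_coe_of_notMem (α : H → k) {g : G} (hg : g ∉ H) :
    Function.extend ((↑) : H → G) α 0 g = 0 :=
  Function.extend_apply' _ _ _ fun ⟨h, hh⟩ ↦ hg (hh ▸ h.2)

variable [Fintype G]

variable (H) in
/-- The function on `G` induced by a function on the subgroup `H`. -/
noncomputable def inducedFun (α : H → k) (g : G) : k :=
  (Nat.card H : k)⁻¹ * ∑ x : G, Function.extend ((↑) : H → G) α 0 (x * g * x⁻¹)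

theorem inducedFun_sub (α β : H → k) (g : G) :
    H.inducedFun (α - β) g = H.inducedFun α g - H.inducedFun β g := by
  simp only [inducedFun, ← mul_sub, ← Finset.sum_sub_distrib]
  congr! 2 with x
  by_cases hx : x * g * x⁻¹ ∈ H
  · simp [extend_coe_of_mem _ hx]
  · simp [extend_coe_of_notMem _ hx]

theorem inducedFun_conj (α : H → k) (g y : G) :
    H.inducedFun α (y * g * y⁻¹) = H.inducedFun α g := by
  rw [inducedFun, inducedFun]
  congr 1
  refine Fintype.sum_equiv (Equiv.mulRight y) _ _ fun x ↦ ?_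
  simp [mul_assoc]

theorem inducedFun_eq_zero (α : H → k) {g : G} (hg : ∀ x : G, x * g * x⁻¹ ∉ H) :
    H.inducedFun α g = 0 := by
  simp [inducedFun, extend_coe_of_notMem _ (hg _)]

theorem sum_inducedFun_mul [Fintype H] (α : H → k) {F : G → k}
    (hF : ∀ g y, F (y * g * y⁻¹) = F g) :
    ∑ g, H.inducedFun α g * F g = Nat.card G * (Nat.card H : k)⁻¹ * ∑ h : H, α h * F h := by
  have key : ∀ x : G, ∑ g, Function.extend ((↑) : H → G) α 0 (x * g * x⁻¹) * F g =
      ∑ h : H, α h * F h := by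
    intro x
    have hconj : ∑ g, Function.extend ((↑) : H → G) α 0 (x * g * x⁻¹) * F g =
        ∑ g, Function.extend ((↑) : H → G) α 0 g * F g :=
      Fintype.sum_equiv (MulAut.conj x).toEquiv _ _ fun g ↦ by simp [hF]
    rw [hconj]
    refine (Fintype.sum_of_injective ((↑) : H → G) Subtype.val_injective _ _ (fun g hg ↦ ?_)
      fun h ↦ ?_).symm
    · rw [extend_coe_of_notMem _ (by simpa using hg), zero_mul]
    · rw [extend_coe_of_mem _ h.2]
  simp only [inducedFun, mul_assoc _ (Finset.sum _ _), Finset.sum_mul, ← Finset.mul_sum]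
  rw [Finset.sum_comm, Finset.sum_congr rfl fun x _ ↦ key x, Finset.sum_const, Finset.card_univ,
    ← Nat.card_eq_fintype_card, nsmul_eq_mul]
  ring

variable [CharZero k]

/-- Inducing a class function vanishing at `1` from a malnormal subgroup extends it. -/
theorem inducedFun_coe (hmal : ∀ h ∈ H, h ≠ 1 → ∀ x, x * h * x⁻¹ ∈ H → x ∈ H) {α : H → k}
    (hconj : ∀ h a, α (a * h * a⁻¹) = α h) (hone : α 1 = 0) (h : H) :
    H.inducedFun α h = α h := by
  classical
  have key : ∀ x : G, Function.extend ((↑) : H → G) α 0 (x * h * x⁻¹) =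
      if x ∈ H then α h else 0 := by
    intro x
    by_cases hx : x ∈ H
    · rw [extend_coe_of_mem α (H.mul_mem (H.mul_mem hx h.2) (H.inv_mem hx)), if_pos hx]
      exact hconj h ⟨x, hx⟩
    rw [if_neg hx]
    by_cases hh : h = 1
    · subst hh
      simpa using (extend_coe_of_mem α H.one_mem).trans hone
    · exact extend_coe_of_notMem α fun h' ↦ hx (hmal h h.2 (by simpa using hh) x h')
  have hH : (Nat.card H : k) ≠ 0 := Nat.cast_ne_zero.2 Nat.card_pos.ne'
  rw [inducedFun, Finset.sum_congr rfl fun x _ ↦ key x, ← Finset.sum_filter, Finset.sum_const,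
    ← Fintype.card_subtype, nsmul_eq_mul, ← Nat.card_eq_fintype_card]
  exact inv_mul_cancel_left₀ hH _

/-- For a malnormal subgroup, the map `α + d ↦ inducedFun α + d` preserves the norm of class
functions. -/
theorem sum_inducedFun_add_mul [Fintype H]
    (hmal : ∀ h ∈ H, h ≠ 1 → ∀ x, x * h * x⁻¹ ∈ H → x ∈ H)
    {α : H → k} (hconj : ∀ h a, α (a * h * a⁻¹) = α h) (hone : α 1 = 0) (d : k) :
    ∑ g, (H.inducedFun α g + d) * (H.inducedFun α g⁻¹ + d) =
      Nat.card G * (Nat.card H : k)⁻¹ * ∑ h : H, (α h + d) * (α h⁻¹ + d) := by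
  have hH : (Nat.card H : k) ≠ 0 := Nat.cast_ne_zero.2 Nat.card_pos.ne'
  have hinvG : ∑ g, H.inducedFun α g⁻¹ = ∑ g, H.inducedFun α g :=
    Fintype.sum_equiv (Equiv.inv G) _ _ fun _ ↦ rfl
  have hinvH : ∑ h : H, α h⁻¹ = ∑ h : H, α h :=
    Fintype.sum_equiv (Equiv.inv H) _ _ fun _ ↦ rfl
  have hmul := sum_inducedFun_mul α (F := fun g ↦ H.inducedFun α g⁻¹) fun g y ↦ by
    rw [← inducedFun_conj α g⁻¹ y]
    congr 1
    group
  have hsum := sum_inducedFun_mul α (F := 1) fun g y ↦ rfl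
  have hcoe (h : H) : H.inducedFun α (h : G)⁻¹ = α h⁻¹ := inducedFun_coe hmal hconj hone h⁻¹
  simp only [hcoe, Pi.one_apply, mul_one] at hmul hsum
  simp only [add_mul, mul_add, Finset.sum_add_distrib, ← Finset.mul_sum, ← Finset.sum_mul, hinvG,
    hinvH, hmul, hsum, Finset.sum_const, Finset.card_univ, ← Nat.card_eq_fintype_card,
    nsmul_eq_mul]
  field_simp

end Subgroup

namespace Representation

theorem isCompl_toSubmodule {k G V : Type*} [Field k] [Group G] [AddCommGroup V] [Module k V]
    {ρ : Representation k G V} {S T : Subrepresentation ρ} (h : IsCompl S T) :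
    IsCompl S.toSubmodule T.toSubmodule := by
  refine IsCompl.of_eq ?_ ?_
  · rw [← Subrepresentation.toSubmodule_inf, h.inf_eq_bot]; rfl
  · rw [← Subrepresentation.toSubmodule_sup, h.sup_eq_top]; rfl

section Decomposition

variable {k G V W : Type*} [Field k] [Group G] [AddCommGroup V] [Module k V]
  [FiniteDimensional k V] [AddCommGroup W] [Module k W] [FiniteDimensional k W]

theorem char_prod (ρ : Representation k G V) (σ : Representation k G W) :
    (ρ.prod σ).character = ρ.character + σ.character := by
  ext g
  exact LinearMap.trace_prodMap' (ρ g) (σ g)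

/-- A representation is isomorphic to the product of two complementary subrepresentations. -/
noncomputable def Equiv.prodOfIsCompl {ρ : Representation k G V} {S T : Subrepresentation ρ}
    (h : IsCompl S.toSubmodule T.toSubmodule) :
    (S.toRepresentation.prod T.toRepresentation).Equiv ρ :=
  Equiv.mk (Submodule.prodEquivOfIsCompl _ _ h) fun g ↦ by
    refine LinearMap.ext fun x ↦ ?_
    exact (map_add (ρ g) (x.1 : V) (x.2 : V)).symm

theorem char_eq_add_of_isCompl {ρ : Representation k G V} {S T : Subrepresentation ρ}
    (h : IsCompl S T) :
    ρ.character = S.toRepresentation.character + T.toRepresentation.character := by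
  rw [← char_iso (Equiv.prodOfIsCompl (isCompl_toSubmodule h)), char_prod]

end Decomposition

/-- If a group element acts nontrivially in some finite-dimensional representation, then it acts
nontrivially in some irreducible one. -/
theorem exists_isIrreducible_apply_ne_one {k G : Type*} [Field k] [Group G] [Finite G]
    [NeZero (Nat.card G : k)] {V : Type w} [AddCommGroup V] [Module k V] [FiniteDimensional k V]
    (ρ : Representation k G V) {g : G} (hg : ρ g ≠ 1) :
    ∃ (W : Type w) (_ : AddCommGroup W) (_ : Module k W) (_ : FiniteDimensional k W)
      (σ : Representation k G W), IsIrreducible σ ∧ σ g ≠ 1 := by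
  induction hn : finrank k V using Nat.strong_induction_on generalizing V with
  | _ n ih =>
  subst hn
  by_cases hirr : IsIrreducible ρ
  · exact ⟨V, _, _, inferInstance, ρ, hirr, hg⟩
  obtain ⟨v, hv⟩ : ∃ v, ρ g v ≠ v := by
    by_contra! h
    exact hg (LinearMap.ext h)
  obtain ⟨S, hbot, htop⟩ : ∃ S : Subrepresentation ρ, S ≠ ⊥ ∧ S ≠ ⊤ := by
    by_contra! h
    have hnt : (⊥ : Subrepresentation ρ) ≠ ⊤ := fun h' ↦ hv <| by
      have hz : ∀ u : V, u = 0 := fun u ↦ by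
        have : u ∈ (⊤ : Subrepresentation ρ) := True.intro
        rw [← h'] at this
        exact this
      rw [hz (ρ g v), hz v]
    exact hirr
      { exists_pair_ne := ⟨⊥, ⊤, hnt⟩
        eq_bot_or_eq_top := fun S ↦ or_iff_not_imp_left.2 (h S) }
  obtain ⟨T, hST⟩ := exists_isCompl S
  have hlt : ∀ S : Subrepresentation ρ, S ≠ ⊤ → finrank k S.toSubmodule < finrank k V :=
    fun S hS ↦ Submodule.finrank_lt fun h ↦ hS (Subrepresentation.toSubmodule_injective h)
  by_cases hS : S.toRepresentation g = 1
  · by_cases hT : T.toRepresentation g = 1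
    · obtain ⟨⟨⟨s, hs⟩, t, ht⟩, rfl⟩ :=
        (Submodule.prodEquivOfIsCompl _ _ (isCompl_toSubmodule hST)).surjective v
      have h1 : ρ g s = s := congrArg Subtype.val (LinearMap.congr_fun hS ⟨s, hs⟩)
      have h2 : ρ g t = t := congrArg Subtype.val (LinearMap.congr_fun hT ⟨t, ht⟩)
      exact absurd (by simp [h1, h2]) hv
    · exact ih _ (hlt T fun h ↦ hbot (by simpa [h] using hST.inf_eq_bot)) _ hT rfl
  · exact ih _ (hlt S htop) _ hS rfl

theorem sum_char_mul_char_inv_comm {k G V W : Type*} [Field k] [Group G] [Fintype G]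
    [AddCommGroup V] [Module k V] [AddCommGroup W] [Module k W]
    (ρ : Representation k G V) (σ : Representation k G W) :
    ∑ g, ρ.character g * σ.character g⁻¹ = ∑ g, σ.character g * ρ.character g⁻¹ := by
  rw [← Equiv.sum_comp (Equiv.inv G)]
  simp [mul_comm]

section CharZero

variable {k G V W : Type*} [Field k] [CharZero k] [Group G] [Fintype G]
  [AddCommGroup V] [Module k V] [FiniteDimensional k V]
  [AddCommGroup W] [Module k W] [FiniteDimensional k W]

theorem sum_char_mul_char_inv (ρ : Representation k G V) (σ : Representation k G W) :
    ∑ g, ρ.character g * σ.character g⁻¹ = Nat.card G * finrank k (IntertwiningMap σ ρ) := by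
  have hG : (Nat.card G : k) ≠ 0 := Nat.cast_ne_zero.2 Nat.card_pos.ne'
  let := invertibleOfNonzero hG
  rw [← card_inv_mul_sum_char_mul_char_eq_finrank, mul_inv_cancel_left₀ hG]

/-- A nonzero intertwining map splits off isomorphic summands from its source and its target. -/
theorem exists_char_sub_eq_of_intertwiningMap_ne_zero {ρ : Representation k G V}
    {σ : Representation k G W} {f : IntertwiningMap ρ σ} (hf : f ≠ 0) :
    ∃ (S : Subrepresentation ρ) (T : Subrepresentation σ), S ≠ ⊤ ∧
      S.toRepresentation.character - T.toRepresentation.character =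
        ρ.character - σ.character := by
  have : NeZero (Nat.card G : k) := ⟨Nat.cast_ne_zero.2 Nat.card_pos.ne'⟩
  obtain ⟨C, hC⟩ := exists_isCompl f.ker
  obtain ⟨T, hT⟩ := exists_isCompl f.range
  refine ⟨f.ker, T, fun h ↦ hf ?_, ?_⟩
  · refine IntertwiningMap.ext (LinearMap.ext fun v ↦ ?_)
    have : v ∈ (⊤ : Subrepresentation ρ) := True.intro
    rw [← h] at this
    exact this
  · let e : C.toSubmodule ≃ₗ[k] f.range.toSubmodule :=
      f.toLinearMap.kerComplementEquivRange (isCompl_toSubmodule hC).symm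
    have hchar : C.toRepresentation.character = f.range.toRepresentation.character :=
      char_iso (Equiv.mk e fun g ↦ LinearMap.ext fun v ↦
        Subtype.ext (IntertwiningMap.isIntertwining ρ σ f g v))
    rw [char_eq_add_of_isCompl hC, char_eq_add_of_isCompl hT, hchar]
    abel

end CharZero

theorem finrank_intertwiningMap_self_eq_zero_iff {k G V : Type*} [Field k] [Group G]
    [AddCommGroup V] [Module k V] [FiniteDimensional k V] (ρ : Representation k G V) :
    finrank k (IntertwiningMap ρ ρ) = 0 ↔ finrank k V = 0 := by
  have : Module.Finite k (IntertwiningMap ρ ρ) :=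
    Module.Finite.equiv (invariantsEquivIntertwiningMap ρ ρ)
  rw [finrank_zero_iff, finrank_zero_iff]
  refine ⟨fun h ↦ ⟨fun v w ↦ ?_⟩, fun h ↦ ⟨fun f g ↦ ?_⟩⟩
  · have : ∀ v : V, v = 0 := fun v ↦
      LinearMap.congr_fun (congrArg IntertwiningMap.toLinearMap
        (Subsingleton.elim (IntertwiningMap.id ρ) 0)) v
    rw [this v, this w]
  · exact IntertwiningMap.ext (Subsingleton.elim _ _)

/-- If the difference of the characters of two representations has norm one and nonnegative degree,
then it is the character of a representation. -/
theorem exists_char_eq_sub {k G : Type*} [Field k] [CharZero k] [Group G] [Fintype G]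
    {V : Type w} {W : Type u} [AddCommGroup V] [Module k V] [FiniteDimensional k V]
    [AddCommGroup W] [Module k W] [FiniteDimensional k W]
    (ρ : Representation k G V) (σ : Representation k G W)
    (hdim : finrank k W ≤ finrank k V)
    (hnorm : ∑ g, (ρ.character g - σ.character g) * (ρ.character g⁻¹ - σ.character g⁻¹) =
      Nat.card G) :
    ∃ (U : Type w) (_ : AddCommGroup U) (_ : Module k U) (_ : FiniteDimensional k U)
      (τ : Representation k G U), τ.character = ρ.character - σ.character := by
  induction hn : finrank k V using Nat.strong_induction_on generalizing V W with
  | _ n ih =>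
  subst hn
  by_cases hf : ∃ f : IntertwiningMap ρ σ, f ≠ 0
  · obtain ⟨f, hf⟩ := hf
    obtain ⟨S, T, hS, hST⟩ := exists_char_sub_eq_of_intertwiningMap_ne_zero hf
    have hlt : finrank k S.toSubmodule < finrank k V :=
      Submodule.finrank_lt fun h ↦ hS (Subrepresentation.toSubmodule_injective h)
    have hST' := fun g ↦ congrFun hST g
    simp only [Pi.sub_apply] at hST'
    rw [← hST]
    refine ih _ hlt S.toRepresentation T.toRepresentation ?_ ?_ rfl
    · have h1 := hST' 1
      simp only [char_one] at h1
      rw [sub_eq_sub_iff_add_eq_add] at h1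
      norm_cast at h1
      omega
    · simp only [hST', hnorm]
  · push Not at hf
    have hzero : finrank k (IntertwiningMap ρ σ) = 0 := by
      have : Subsingleton (IntertwiningMap ρ σ) := ⟨fun a b ↦ by rw [hf a, hf b]⟩
      exact finrank_zero_of_subsingleton
    have hG : (Nat.card G : k) ≠ 0 := Nat.cast_ne_zero.2 Nat.card_pos.ne'
    have hend : finrank k (IntertwiningMap ρ ρ) + finrank k (IntertwiningMap σ σ) = 1 := by
      simp only [sub_mul, mul_sub, Finset.sum_sub_distrib] at hnorm
      rw [sum_char_mul_char_inv_comm ρ σ, sum_char_mul_char_inv, sum_char_mul_char_inv,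
        sum_char_mul_char_inv, hzero] at hnorm
      have : (Nat.card G : k) * ((finrank k (IntertwiningMap ρ ρ) +
          finrank k (IntertwiningMap σ σ) : ℕ) : k) = Nat.card G * 1 := by
        push_cast
        linear_combination hnorm
      exact_mod_cast mul_left_cancel₀ hG this
    have hV : finrank k (IntertwiningMap ρ ρ) ≠ 0 := fun h ↦ by
      have hσ : finrank k (IntertwiningMap σ σ) ≠ 0 := by omega
      rw [Ne, finrank_intertwiningMap_self_eq_zero_iff] at hσ
      rw [finrank_intertwiningMap_self_eq_zero_iff] at h
      omega
    have hW : finrank k W = 0 := (finrank_intertwiningMap_self_eq_zero_iff σ).1 (by omega)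
    refine ⟨V, _, _, inferInstance, ρ, ?_⟩
    have := finrank_zero_iff.1 hW
    ext g
    simp [character, Subsingleton.elim (σ g) 0]

/-- The character of an induced representation. -/
theorem char_coind {k G V : Type*} [Field k] [CharZero k] [Group G] [Fintype G]
    [AddCommGroup V] [Module k V] [FiniteDimensional k V] (H : Subgroup G)
    (ρ : Representation k H V) (g : G) :
    (coind H.subtype ρ).character g = H.inducedFun ρ.character g := by
  classical
  have hH : (Nat.card H : k) ≠ 0 := Nat.cast_ne_zero.2 Nat.card_pos.ne'
  let T : End k (G → V) := (Nat.card H : k)⁻¹ • ∑ h : H,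
    (ρ h).compLeft G ∘ₗ LinearMap.funLeft k V (fun x ↦ (h : G)⁻¹ * x * g)
  have hT : ∀ f x, T f x = (Nat.card H : k)⁻¹ • ∑ h : H, ρ h (f ((h : G)⁻¹ * x * g)) := by
    intro f x
    simp [T, LinearMap.sum_apply, LinearMap.funLeft]
  have hmem : ∀ f, T f ∈ coindV H.subtype ρ := by
    intro f a x
    rw [hT, hT, map_smul, map_sum, ← Equiv.sum_comp (Equiv.mulLeft a)]
    congr 1
    refine Finset.sum_congr rfl fun h _ ↦ ?_
    simp [mul_assoc]
  have hres : coind H.subtype ρ g = T.restrict fun f _ ↦ hmem f := by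
    refine LinearMap.ext fun f ↦ Subtype.ext (funext fun x ↦ ?_)
    have : ∀ h : H, ρ h (f.1 ((h : G)⁻¹ * x * g)) = f.1 (x * g) := by
      intro h
      rw [← f.2 h]
      simp [mul_assoc]
    rw [LinearMap.coe_restrict_apply, hT, Finset.sum_congr rfl fun h _ ↦ this h]
    simp only [Finset.sum_const, Finset.card_univ, ← Nat.card_eq_fintype_card,
      ← Nat.cast_smul_eq_nsmul k, inv_smul_smul₀ hH]
    rfl
  rw [character, hres, LinearMap.trace_restrict_eq_of_forall_mem _ _ hmem,
    LinearMap.trace_pi_eq_sum, Subgroup.inducedFun, Finset.mul_sum]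
  refine Finset.sum_congr rfl fun x _ ↦ ?_
  have hblock : LinearMap.proj x ∘ₗ T ∘ₗ LinearMap.single k (fun _ ↦ V) x =
      (Nat.card H : k)⁻¹ • ∑ h : H, if (h : G) = x * g * x⁻¹ then ρ h else 0 := by
    refine LinearMap.ext fun v ↦ ?_
    simp only [LinearMap.comp_apply, LinearMap.proj_apply, hT, LinearMap.smul_apply,
      LinearMap.sum_apply, LinearMap.single_apply]
    congr 1
    refine Finset.sum_congr rfl fun h _ ↦ ?_
    by_cases hx : (h : G) = x * g * x⁻¹
    · simp [hx, mul_assoc]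
    · have : (h : G)⁻¹ * x * g ≠ x := fun h' ↦ hx (by
        rw [mul_assoc, inv_mul_eq_iff_eq_mul] at h'
        rw [h', mul_inv_cancel_right])
      simp [hx, this]
  rw [hblock, map_smul, map_sum, smul_eq_mul]
  congr 1
  by_cases hx : x * g * x⁻¹ ∈ H
  · rw [Subgroup.extend_coe_of_mem _ hx, Finset.sum_eq_single ⟨x * g * x⁻¹, hx⟩]
    · simp [character]
    · intro h _ hne
      rw [if_neg fun h' ↦ hne (Subtype.ext h'), map_zero]
    · simp
  · rw [Subgroup.extend_coe_of_notMem _ hx]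
    refine Finset.sum_eq_zero fun h _ ↦ ?_
    rw [if_neg fun h' : (h : G) = x * g * x⁻¹ ↦ hx (h' ▸ h.2), map_zero]

/-- In a complex representation of a finite group, the elements at which the character takes the
value of the degree act trivially. -/
theorem apply_eq_one_of_char_eq_char_one {G V : Type*} [Group G] [Finite G] [AddCommGroup V]
    [Module ℂ V] [FiniteDimensional ℂ V] {ρ : Representation ℂ G V} {g : G}
    (hg : ρ.character g = ρ.character 1) : ρ g = 1 :=
  LinearMap.eq_one_of_pow_eq_one_of_trace_eq_finrank (orderOf_pos g).ne'
    (by rw [← map_pow, pow_orderOf_eq_one, map_one]) (by rw [← char_one ρ, ← hg]; rfl)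

/-- An irreducible character of a malnormal subgroup extends to a character of the whole group
which takes the value of the degree at all elements having no conjugate in the subgroup. -/
theorem exists_char_extension {G : Type w} [Group G] [Fintype G] {H : Subgroup G}
    (hmal : ∀ h ∈ H, h ≠ 1 → ∀ x, x * h * x⁻¹ ∈ H → x ∈ H) {V : Type w} [AddCommGroup V]
    [Module ℂ V] [FiniteDimensional ℂ V] (σ : Representation ℂ H V) [IsIrreducible σ] :
    ∃ (U : Type w) (_ : AddCommGroup U) (_ : Module ℂ U) (_ : FiniteDimensional ℂ U)
      (τ : Representation ℂ G U), (∀ h : H, τ.character h = σ.character h) ∧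
      ∀ g : G, (∀ x : G, x * g * x⁻¹ ∉ H) → τ.character g = τ.character 1 := by
  classical
  set d : ℂ := (finrank ℂ V : ℂ) with hd
  set α : H → ℂ := σ.character - (trivial ℂ H V).character with hα
  have htriv {K : Type w} [Group K] (x : K) : (trivial ℂ K V).character x = d :=
    LinearMap.trace_one ℂ V
  have hadd (h : H) : α h + d = σ.character h := by
    simp [hα, htriv]
  have hone : α 1 = 0 := by
    simp [hα]
  have hconj (h a : H) : α (a * h * a⁻¹) = α h := by
    simp [hα]
  have hcoe (h : H) : H.inducedFun α h = α h := Subgroup.inducedFun_coe hmal hconj hone h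
  have hdiff (g : G) : ((coind H.subtype σ).prod (trivial ℂ G V)).character g -
      (coind H.subtype (trivial ℂ H V)).character g = H.inducedFun α g + d := by
    rw [char_prod, Pi.add_apply, char_coind, char_coind, htriv, hα, Subgroup.inducedFun_sub]
    ring
  have hdone := (hdiff 1).trans (congrArg (· + d) ((hcoe 1).trans hone))
  obtain ⟨U, _, _, _, τ, hτ⟩ := exists_char_eq_sub
    ((coind H.subtype σ).prod (trivial ℂ G V)) (coind H.subtype (trivial ℂ H V))
    (by
      rw [char_one, char_one, zero_add, sub_eq_iff_eq_add, hd] at hdone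
      norm_cast at hdone
      omega)
    (by
      have hG : (Nat.card H : ℂ) ≠ 0 := Nat.cast_ne_zero.2 Nat.card_pos.ne'
      simp only [hdiff]
      rw [Subgroup.sum_inducedFun_add_mul hmal hconj hone]
      simp only [hadd]
      rw [sum_char_mul_char_inv, IsIrreducible.finrank_intertwiningMap_self]
      field_simp
      simp)
  have hτ' (g : G) : τ.character g = H.inducedFun α g + d := by
    rw [hτ, Pi.sub_apply, hdiff]
  refine ⟨U, _, _, inferInstance, τ, fun h ↦ ?_, fun g hg ↦ ?_⟩
  · rw [hτ', hcoe, hadd]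
  · have h1 := (hcoe 1).trans hone
    rw [OneMemClass.coe_one] at h1
    rw [hτ', hτ', Subgroup.inducedFun_eq_zero α hg, h1]

/-- Nontrivial elements act nontrivially in the regular representation. -/
theorem leftRegular_apply_ne_one {k G : Type*} [Field k] [Group G] {g : G} (hg : g ≠ 1) :
    leftRegular k G g ≠ 1 := by
  intro h
  have h1 := LinearMap.congr_fun h (MonoidAlgebra.single 1 1)
  simp [MonoidAlgebra.single_left_inj] at h1
  exact hg h1

end Representation

/-- A finite Frobenius group is not simple: if `H` is a nontrivial proper subgroup of a
finite group `G` such that `H ⊓ x⁻¹Hx = ⊥` for every `x ∉ H`, then `G` is not simple. -/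
theorem frobenius_group_not_simple {G : Type*} [Group G] [Finite G] (H : Subgroup G)
    (hbot : H ≠ ⊥) (htop : H ≠ ⊤)
    (hmal : ∀ x : G, x ∉ H → H ⊓ Subgroup.map ((MulAut.conj x⁻¹).toMonoidHom) H = ⊥) :
    ¬ IsSimpleGroup G := by
  intro hsimple
  have := Fintype.ofFinite G
  have hmal' : ∀ h ∈ H, h ≠ 1 → ∀ x, x * h * x⁻¹ ∈ H → x ∈ H := by
    intro h hh hne x hx
    by_contra hxH
    have hmem : h ∈ H ⊓ Subgroup.map ((MulAut.conj x⁻¹).toMonoidHom) H :=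
      ⟨hh, x * h * x⁻¹, hx, by simp [mul_assoc]⟩
    rw [hmal x hxH] at hmem
    exact hne hmem
  obtain ⟨⟨h, hh⟩, hne⟩ := Subgroup.ne_bot_iff_exists_ne_one.1 hbot
  have : NeZero (Nat.card H : ℂ) := ⟨Nat.cast_ne_zero.2 Nat.card_pos.ne'⟩
  obtain ⟨V, _, _, _, σ, _, hσ⟩ :=
    Representation.exists_isIrreducible_apply_ne_one _
      (Representation.leftRegular_apply_ne_one (k := ℂ) hne)
  obtain ⟨U, _, _, _, τ, hτ, hτker⟩ := Representation.exists_char_extension hmal' σ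
  obtain ⟨g, hg⟩ := H.exists_forall_conj_notMem htop
  rcases hsimple.eq_bot_or_eq_top_of_normal (MonoidHom.ker τ) inferInstance with hker | hker
  · have hgker : g ∈ MonoidHom.ker τ :=
      Representation.apply_eq_one_of_char_eq_char_one (hτker g hg)
    rw [hker, Subgroup.mem_bot] at hgker
    exact hg 1 (by simp [hgker])
  · have hhker : h ∈ MonoidHom.ker τ := hker ▸ Subgroup.mem_top h
    refine hσ (Representation.apply_eq_one_of_char_eq_char_one ?_)
    rw [← hτ, ← hτ, Representation.character, MonoidHom.mem_ker.1 hhker, Representation.character,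
      OneMemClass.coe_one, map_one τ]
end

section
/- Let G be a finitely generated free abelian group and let M be a finite abelian group equipped with an action of G by group automorphisms (a G-module whose underlying set is finite). Then for every n ≥ 0 the group cohomology H^n(G, M) is a finite group. (Finiteness hypothesis verified in Examples 5.4 and 5.6, needed to apply Lemma 5.5.) -/
open CategoryTheory Limits

universe v u

namespace CategoryTheory.ProjectiveResolution

variable {C : Type u} [Category.{v} C] [Abelian C]

/-- A chain complex of projective objects which is exact in positive degrees, together with an
epimorphism from its degree zero term to `Z` continuing it exactly, is a projective resolution
of `Z`. -/
noncomputable def ofExact {Z : C} (K : ChainComplex C ℕ) (hK : ∀ n, Projective (K.X n))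
    (π : K.X 0 ⟶ Z) [Epi π] (h₀ : K.d 1 0 ≫ π = 0) (e₀ : (ShortComplex.mk _ _ h₀).Exact)
    (e : ∀ n, (ShortComplex.mk _ _ (K.d_comp_d (n + 2) (n + 1) n)).Exact) :
    ProjectiveResolution Z where
  complex := K
  projective := hK
  π := (ChainComplex.toSingle₀Equiv _ _).symm ⟨π, h₀⟩
  quasiIso := ⟨fun n => by
    cases n with
    | zero =>
      rw [ChainComplex.quasiIsoAt₀_iff, ShortComplex.quasiIso_iff_of_zeros' _
        (K.shape _ _ (by simp)) rfl rfl]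
      have hπ : ((K.toSingle₀Equiv Z).symm ⟨π, h₀⟩).f 0 = π :=
        ChainComplex.toSingle₀Equiv_symm_apply_f_zero _ _
      refine (ShortComplex.exact_and_epi_g_iff_of_iso ?_).2 ⟨e₀, ‹Epi π›⟩
      refine ShortComplex.isoMk (Iso.refl (K.X 1)) (Iso.refl (K.X 0)) (Iso.refl Z) ?_ ?_
      · exact (Category.id_comp _).trans (Category.comp_id _).symm
      · exact (Category.id_comp _).trans (hπ.symm.trans (Category.comp_id _).symm)
    | succ n =>
      rw [quasiIsoAt_iff_exactAt' _ _ (ChainComplex.exactAt_succ_single_obj _ _),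
        HomologicalComplex.exactAt_iff' _ (n + 2) (n + 1) n (by simp) (by simp)]
      exact e n⟩

/-- If a property `P` of objects is inherited by subobjects and every object satisfying `P` is a
quotient of a projective object satisfying `P`, then every object satisfying `P` has a projective
resolution by objects satisfying `P`. -/
theorem exists_forall_complex_X_mem (P : ObjectProperty C) [EnoughProjectives C]
    (hsub : ∀ {X Y : C} (f : X ⟶ Y) [Mono f], P Y → P X)
    (hcover : ∀ X, P X → ∃ (Y : C) (f : Y ⟶ X), Projective Y ∧ Epi f ∧ P Y)
    (Z : C) (hZ : P Z) :
    ∃ R : ProjectiveResolution Z, ∀ n, P (R.complex.X n) := by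
  have key : ∀ X : C, ∃ (Y : C) (f : Y ⟶ X), Projective Y ∧ Epi f ∧ (P X → P Y) := by
    intro X
    by_cases h : P X
    · obtain ⟨Y, f, h1, h2, h3⟩ := hcover X h
      exact ⟨Y, f, h1, h2, fun _ => h3⟩
    · exact ⟨_, Projective.π X, inferInstance, inferInstance, fun h' => absurd h' h⟩
  choose cover p hproj hepi hP using key
  let d {X Y : C} (f : X ⟶ Y) : cover (kernel f) ⟶ X := p (kernel f) ≫ kernel.ι f
  have hd {X Y : C} (f : X ⟶ Y) : d f ≫ f = 0 := by simp [d]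
  have hexact {X Y : C} (f : X ⟶ Y) : (ShortComplex.mk (d f) f (hd f)).Exact := by
    let α : ShortComplex.mk (d f) f (hd f) ⟶ ShortComplex.mk (kernel.ι f) f (by simp) :=
      { τ₁ := p _, τ₂ := 𝟙 _, τ₃ := 𝟙 _ }
    have : Epi α.τ₁ := hepi _
    have : IsIso α.τ₂ := by dsimp [α]; infer_instance
    have : Mono α.τ₃ := by dsimp [α]; infer_instance
    rw [ShortComplex.exact_iff_of_epi_of_isIso_of_mono α]
    exact ShortComplex.exact_of_f_is_kernel _ (kernelIsKernel f)
  obtain ⟨X, δ, π, hX, hXP, hπ, h₀, hδ, e₀, e⟩ : ∃ (X : ℕ → C) (δ : ∀ n, X (n + 1) ⟶ X n)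
      (π : X 0 ⟶ Z), (∀ n, Projective (X n)) ∧ (∀ n, P (X n)) ∧ Epi π ∧
      ∃ (h₀ : δ 0 ≫ π = 0) (hδ : ∀ n, δ (n + 1) ≫ δ n = 0),
        (ShortComplex.mk _ _ h₀).Exact ∧ ∀ n, (ShortComplex.mk _ _ (hδ n)).Exact := by
    let T : ℕ → Arrow C := fun n =>
      Nat.rec (Arrow.mk (p Z)) (fun _ f => Arrow.mk (d f.hom)) n
    refine ⟨fun n => (T n).left, fun n => (T (n + 1)).hom, (T 0).hom, ?_, ?_, hepi Z,
      hd _, fun n => hd _, hexact _, fun n => hexact _⟩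
    · rintro (_ | n) <;> exact hproj _
    · intro n
      induction n with
      | zero => exact hP _ hZ
      | succ n ih => exact hP _ (hsub (kernel.ι _) ih)
  have hK (n : ℕ) : (ChainComplex.of X δ hδ).d (n + 1) n = δ n := ChainComplex.of_d ..
  have hK₀ : (ChainComplex.of X δ hδ).d 1 0 ≫ π = 0 := by rw [hK 0]; exact h₀
  refine ⟨ofExact (ChainComplex.of X δ hδ) hX π hK₀ ?_ fun n => ?_, hXP⟩
  · convert e₀ using 2
    exact hK 0
  · convert e n using 2
    · exact hK _
    · exact hK _

end CategoryTheory.ProjectiveResolution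

theorem ModuleCat.finite_homology {R : Type*} [Ring R] {ι : Type*} {c : ComplexShape ι}
    (K : HomologicalComplex (ModuleCat R) c) (i : ι) [Finite (K.X i)] : Finite (K.homology i) := by
  have : Finite (K.cycles i) :=
    Finite.of_injective _ ((ModuleCat.mono_iff_injective (K.iCycles i)).1 inferInstance)
  exact Finite.of_surjective _ ((ModuleCat.epi_iff_surjective (K.homologyπ i)).1 inferInstance)

theorem LinearMap.finite_of_module_finite {R M N : Type*} [Ring R] [AddCommGroup M] [Module R M]
    [AddCommGroup N] [Module R N] [Module.Finite R M] [Finite N] : Finite (M →ₗ[R] N) := by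
  obtain ⟨n, f, hf⟩ := Module.Finite.exists_fin' R M
  refine Finite.of_injective
    (fun (g : M →ₗ[R] N) (i : Fin n) => g (f (Pi.single i 1))) fun g h hgh => ?_
  have : g.comp f = h.comp f := by
    ext i
    simpa using congrFun hgh i
  ext x
  obtain ⟨y, rfl⟩ := hf x
  exact LinearMap.congr_fun this y

theorem isNoetherianRing_monoidAlgebra (k G : Type*) [CommRing k] [IsNoetherianRing k]
    [CommGroup G] [Group.FG G] : IsNoetherianRing (MonoidAlgebra k G) := by
  have : Algebra.FiniteType k (MonoidAlgebra k G) := inferInstance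
  exact Algebra.FiniteType.isNoetherianRing k _

section

variable {k G : Type u} [CommRing k] [Group G]

theorem Rep.finite_hom (V M : Rep.{u} k G)
    [Module.Finite (MonoidAlgebra k G) (toModuleMonoidAlgebra.obj V)] [Finite M] :
    Finite (V ⟶ M) := by
  have : Finite (toModuleMonoidAlgebra.obj M) := ‹Finite M›
  have : Finite (toModuleMonoidAlgebra.obj V →ₗ[MonoidAlgebra k G] toModuleMonoidAlgebra.obj M) :=
    LinearMap.finite_of_module_finite
  exact Finite.of_injective (fun f => (toModuleMonoidAlgebra.map f).hom)
    fun f g h => toModuleMonoidAlgebra.map_injective (ModuleCat.hom_ext h)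

/-- If `k[G]` is Noetherian, then `k` has a resolution by finitely generated projective
`k[G]`-modules, so the cohomology of `G` with finite coefficients is finite. -/
theorem groupCohomology.finite_of_isNoetherianRing [IsNoetherianRing (MonoidAlgebra k G)]
    (M : Rep.{u} k G) [Finite M] (n : ℕ) : Finite (groupCohomology M n) := by
  obtain ⟨R, hR⟩ := ProjectiveResolution.exists_forall_complex_X_mem
    (fun V : Rep.{u} k G => Module.Finite (MonoidAlgebra k G) (Rep.toModuleMonoidAlgebra.obj V))
    (fun {X Y} f _ hY => by
      have := (ModuleCat.mono_iff_injective (Rep.toModuleMonoidAlgebra.map f)).1 inferInstance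
      exact Module.Finite.of_injective (Rep.toModuleMonoidAlgebra.map f).hom this)
    (fun X hX => by
      obtain ⟨m, f, hf⟩ := Module.Finite.exists_fin' (MonoidAlgebra k G)
        (Rep.toModuleMonoidAlgebra.obj X)
      let F := ModuleCat.of (MonoidAlgebra k G) (Fin m → MonoidAlgebra k G)
      let e := Rep.equivalenceModuleMonoidAlgebra (k := k) (G := G)
      let f' : F ⟶ e.functor.obj X := ModuleCat.ofHom f
      have : Epi f' := (ModuleCat.epi_iff_surjective _).2 hf
      have hF : Projective F := inferInstance
      refine ⟨e.inverse.obj F, e.inverse.map f' ≫ e.unitInv.app X,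
        (e.symm.map_projective_iff F).2 hF, inferInstance, ?_⟩
      have : Module.Finite (MonoidAlgebra k G) F :=
        inferInstanceAs (Module.Finite _ (Fin m → MonoidAlgebra k G))
      exact Module.Finite.equiv (Rep.counitIso F).toLinearEquiv.symm)
    (Rep.trivial k G k) (by
      have : Module.Finite k (Rep.trivial k G k).ρ.asModule := inferInstanceAs (Module.Finite k k)
      exact Module.Finite.of_restrictScalars_finite k (MonoidAlgebra k G)
        (Rep.trivial k G k).ρ.asModule)
  have := hR n
  have : Finite (R.complex.X n ⟶ M) := Rep.finite_hom _ _
  have : Finite ((R.complex.linearYonedaObj k M).X n) := this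
  have := ModuleCat.finite_homology (R.complex.linearYonedaObj k M) n
  exact Finite.of_equiv _ (groupCohomologyIso M n R).toLinearEquiv.symm.toEquiv

end

/-- Let `G = ℤ^d` be a finitely generated free abelian group (written multiplicatively)
and let `M` be a representation of `G` over `ℤ` whose underlying abelian group is finite
(a finite `G`-module).  Then the group cohomology `H^n(G, M)` is finite for every
`n ≥ 0` (Examples 5.4 and 5.6). -/
theorem groupCohomology_finite_of_free_abelian_of_finite (d : ℕ)
    (M : Rep ℤ (Multiplicative (Fin d → ℤ))) [Finite M] (n : ℕ) :
    Finite (groupCohomology M n) := by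
  have := isNoetherianRing_monoidAlgebra ℤ (Multiplicative (Fin d → ℤ))
  exact groupCohomology.finite_of_isNoetherianRing M n
end
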